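/- Let D ⊂ ℂ be an open set that is star-shaped with respect to 0 (i.e. 0 ∈ D and for every p ∈ D the segment {pt : t ∈ [0,1]} is contained in D) and contains the open unit disc 𝔻. If f is analytic on D, then Af is analytic on D. -/

import Mathlib

open MeasureTheory Filter Topology

/-- `G_f(p) = ∫_0^1 f(pt)(1−t)^{−1/2} dt`. -/
noncomputable def Gop (f : ℂ → ℂ) (p : ℂ) : ℂ :=
  ∫ t in (0:ℝ)..1, f (p * (t:ℂ)) * (((1 - t) ^ (-(1/2) : ℝ) : ℝ) : ℂ)

/-- `(Af)(p) = G_f(p)/2 + p·G_f'(p)`, realizing `√p (d/dp)[p^{−1/2} * f](p)`. -/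
noncomputable def Aop (f : ℂ → ℂ) (p : ℂ) : ℂ :=
  Gop f p / 2 + p * deriv (Gop f) p

lemma weight_ii : IntervalIntegrable (fun t : ℝ => (1 - t) ^ (-(1/2) : ℝ)) volume 0 1 := by
  have h := (intervalIntegral.intervalIntegrable_rpow' (a := 0) (b := 1) (r := -(1/2))
    (by norm_num)).comp_sub_left 1
  simpa using h.symm

lemma Gop_diff (D : Set ℂ) (hD : IsOpen D)
    (hstar : ∀ p ∈ D, ∀ t ∈ Set.Icc (0:ℝ) 1, (t:ℂ) * p ∈ D)
    (f : ℂ → ℂ) (hf : AnalyticOnNhd ℂ f D) (p : ℂ) (hp : p ∈ D) :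
    DifferentiableAt ℂ (Gop f) p := by
  obtain ⟨r, hr, hrD⟩ := Metric.nhds_basis_closedBall.mem_iff.1 (hD.mem_nhds hp)
  have hmem : ∀ x ∈ D, ∀ t ∈ Set.Icc (0:ℝ) 1, x * (t:ℂ) ∈ D := fun x hx t ht => by
    rw [mul_comm]; exact hstar x hx t ht
  have hK : IsCompact ((fun q : ℂ × ℝ => q.1 * (q.2 : ℂ)) ''
      (Metric.closedBall p r ×ˢ Set.Icc (0:ℝ) 1)) :=
    ((isCompact_closedBall p r).prod isCompact_Icc).image (by fun_prop)
  have hKD : ((fun q : ℂ × ℝ => q.1 * (q.2 : ℂ)) ''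
      (Metric.closedBall p r ×ˢ Set.Icc (0:ℝ) 1)) ⊆ D := by
    rintro _ ⟨q, hq, rfl⟩
    exact hmem _ (hrD hq.1) _ hq.2
  obtain ⟨M, hM⟩ := hK.exists_bound_of_continuousOn (hf.deriv.continuousOn.mono hKD)
  have hc : ∀ g : ℂ → ℂ, ContinuousOn g D → ∀ x ∈ D,
      ContinuousOn (fun t : ℝ => g (x * (t:ℂ))) (Set.Icc 0 1) := fun g hg x hx =>
    hg.comp (by fun_prop) (fun t ht => hmem x hx t ht)
  have hw : IntervalIntegrable (fun t : ℝ => (((1 - t) ^ (-(1/2) : ℝ) : ℝ) : ℂ)) volume 0 1 :=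
    ⟨weight_ii.1.ofReal, weight_ii.2.ofReal⟩
  have hint : ∀ g : ℝ → ℂ, ContinuousOn g (Set.Icc 0 1) →
      IntervalIntegrable (fun t : ℝ => g t * (((1 - t) ^ (-(1/2) : ℝ) : ℝ) : ℂ)) volume 0 1 :=
    fun g hg => hw.continuousOn_mul (by rwa [Set.uIcc_of_le zero_le_one])
  have hmeas : ∀ g : ℝ → ℂ, IntervalIntegrable g volume 0 1 →
      AEStronglyMeasurable g (volume.restrict (Set.uIoc 0 1)) := fun g hg =>
    (intervalIntegrable_iff.1 hg).aestronglyMeasurable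
  have key := intervalIntegral.hasDerivAt_integral_of_dominated_loc_of_deriv_le
    (μ := volume) (a := 0) (b := 1) (x₀ := p) (s := Metric.closedBall p r)
    (F := fun x t => f (x * (t:ℂ)) * (((1 - t) ^ (-(1/2) : ℝ) : ℝ) : ℂ))
    (F' := fun x t => (deriv f (x * (t:ℂ)) * (t:ℂ)) * (((1 - t) ^ (-(1/2) : ℝ) : ℝ) : ℂ))
    (bound := fun t => M * (1 - t) ^ (-(1/2) : ℝ))
    (Metric.closedBall_mem_nhds p hr)
    (by
      filter_upwards [hD.mem_nhds hp] with x hx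
      exact hmeas _ (hint _ (hc f hf.continuousOn x hx)))
    (hint _ (hc f hf.continuousOn p hp))
    (hmeas _ (hint _ ((hc _ hf.deriv.continuousOn p hp).mul (by fun_prop))))
    (by
      refine Eventually.of_forall fun t ht x hx => ?_
      rw [Set.uIoc_of_le zero_le_one] at ht
      have h1 := hM _ ⟨(x, t), ⟨hx, ht.1.le, ht.2⟩, rfl⟩
      have h2 : (0:ℝ) ≤ (1 - t) ^ (-(1/2) : ℝ) := Real.rpow_nonneg (by linarith [ht.2]) _
      rw [norm_mul, norm_mul, Complex.norm_real, Complex.norm_real, Real.norm_of_nonneg h2,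
        Real.norm_of_nonneg ht.1.le]
      refine mul_le_mul_of_nonneg_right ?_ h2
      exact (mul_le_of_le_one_right (norm_nonneg _) ht.2).trans h1)
    (weight_ii.const_mul M)
    (by
      refine Eventually.of_forall fun t ht x hx => ?_
      rw [Set.uIoc_of_le zero_le_one] at ht
      have h1 := (hf _ (hmem x (hrD hx) t ⟨ht.1.le, ht.2⟩)).differentiableAt.hasDerivAt
      have h2 : HasDerivAt (fun x : ℂ => x * (t:ℂ)) (t:ℂ) x := by
        simpa using (hasDerivAt_id x).mul_const (t:ℂ)
      exact (h1.comp x h2).mul_const _)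
  exact key.2.differentiableAt

/-- if `D` is open, star-shaped with respect to `0`, contains the unit disc,
and `f` is analytic on `D`, then `Af` is analytic on `D`. -/
theorem Aop_analytic_on_starshaped
    (D : Set ℂ) (hD : IsOpen D) (h0 : (0:ℂ) ∈ D)
    (hstar : ∀ p ∈ D, ∀ t ∈ Set.Icc (0:ℝ) 1, (t:ℂ) * p ∈ D)
    (hball : Metric.ball (0:ℂ) 1 ⊆ D)
    (f : ℂ → ℂ) (hf : AnalyticOnNhd ℂ f D) :
    AnalyticOnNhd ℂ (Aop f) D := by
  have hG : AnalyticOnNhd ℂ (Gop f) D :=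
    DifferentiableOn.analyticOnNhd
      (fun p hp => (Gop_diff D hD hstar f hf p hp).differentiableWithinAt) hD
  exact (hG.div_const).add (analyticOnNhd_id.mul hG.deriv)
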